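/- Let $(W,S)$ be a Coxeter system and $G$ a group of automorphisms of $W$ stabilizing $S$, so that $(W^G, S_G)$ is a Coxeter system with length function $\ell_G$. Then for all $x, y \in W^G$: $\ell(xy) = \ell(x) + \ell(y)$ if and only if $\ell_G(xy) = \ell_G(x) + \ell_G(y)$, where $\ell$ is the length function of $(W,S)$. -/

import Mathlib

noncomputable section

section Cox
variable (B W : Type) [Group W] (M : CoxeterMatrix B) (cs : CoxeterSystem M W)
  (G : Type) [Group G] [MulDistribMulAction G W]

/-- The subgroup `W^G` of `G`-fixed points of `W`. -/
def fixedSubgroup : Subgroup W where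
  carrier := {w | ∀ σ : G, σ • w = w}
  mul_mem' := by intro a b ha hb; intro σ; rw [smul_mul', ha, hb]
  one_mem' := by intro σ; exact smul_one σ
  inv_mem' := by intro a ha; intro σ; rw [smul_inv', ha]

/-- The standard parabolic subgroup `W_ω` generated by the simple reflections in the
`G`-orbit `ω` of `i`. -/
def parab [MulAction G B] (i : B) : Subgroup W :=
  Subgroup.closure (cs.simple '' MulAction.orbit G i)

/-- The set `S_G` of longest elements `s_ω` of the finite standard parabolic subgroups `W_ω`,
`ω` running over the `G`-orbits in `S`. -/
def SGset [MulAction G B] : Set W :=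
  {w | ∃ i : B, w ∈ parab B W M cs G i ∧ ((parab B W M cs G i : Set W)).Finite ∧
    ∀ u ∈ parab B W M cs G i, cs.length u ≤ cs.length w}
end Cox

/-!
For `x ∈ W^G` the set of left descents of `x` is a union of `G`-orbits, so a nontrivial fixed
element of `W_ω` has all of `ω` as left descents and hence equals `s_ω`. Left inversions satisfy
the cocycle rule `N(uv) = N(u) ∆ u N(v) u⁻¹`. Applied along a word in `S_G`, it shows that every
inversion `sᵢ` of `x ∈ W^G` lies in some `u W_ω' u⁻¹` with `u ∈ W^G` and `u s_ω' u⁻¹` an inversion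
of `x` in `(W^G, S_G)`. If `ω` is the orbit of `i`, then `u⁻¹ s_ω u` is a nontrivial fixed element
of `W_ω'`, so it is `s_ω'` and `s_ω` is a left descent of `x` in `(W^G, S_G)`.

Consequently, if `s_ω` is not a left descent of `x` there, then no simple reflection in `ω` is a
left descent of `x` in `W`, and `ℓ(s_ω x) = ℓ(s_ω) + ℓ(x)`. So `ℓ` restricted to `W^G` is a
subadditive function adding up positive weights along `ℓ_G`-reduced words, and such a function is
additive on a product exactly when `ℓ_G` is.
-/

namespace CoxeterFixedPoints

open CoxeterSystem MulAction
open scoped Pointwise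

section Inversions

variable {B W : Type*} [Group W] {M : CoxeterMatrix B} (cs : CoxeterSystem M W)

theorem induction_of_not_isLeftDescent {p : W → Prop} (w : W) (one : p 1)
    (simple_mul : ∀ i w, ¬ cs.IsLeftDescent w i → p w → p (cs.simple i * w)) : p w := by
  induction hn : cs.length w using Nat.strong_induction_on generalizing w with
  | _ n ih =>
    by_cases hw : w = 1
    · rwa [hw]
    · obtain ⟨i, hi⟩ := cs.exists_leftDescent_of_ne_one hw
      rw [← cs.simple_mul_simple_cancel_left (w := w) i]
      exact simple_mul i _ (cs.isLeftDescent_iff_not_isLeftDescent_mul.mp hi)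
        (ih _ (hn ▸ hi) _ rfl)

theorem end_mul_apply {α : Type*} (f g : Function.End α) (a : α) : (f * g) a = f (g a) :=
  rfl

open scoped Classical in
/-- The transformation `(t, ε) ↦ (sᵢ t sᵢ, ε + [t = sᵢ])` of `W × ZMod 2`. It lifts to an action of
`W`, which records how an element of `W` changes the signs of the reflections. The first component
ranges over all of `W`, not only over the reflections. -/
def reflectionFlip (i : B) : Function.End (W × ZMod 2) := fun p =>
  (cs.simple i * p.1 * cs.simple i, p.2 + if p.1 = cs.simple i then 1 else 0)

theorem pow_mul_conj_eq_simple_mul_pow_iff (i j : B) (n k : ℕ) (t : W) :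
    (cs.simple i * cs.simple j) ^ n * t * ((cs.simple i * cs.simple j) ^ n)⁻¹ =
        cs.simple j * (cs.simple i * cs.simple j) ^ k ↔
      t = cs.simple j * (cs.simple i * cs.simple j) ^ (2 * n + k) := by
  set r := cs.simple i * cs.simple j with hr
  have simple_conj : cs.simple j * r * (cs.simple j)⁻¹ = r⁻¹ := by simp [hr, mul_assoc]
  have pow_inv_mul : (r ^ n)⁻¹ * cs.simple j = cs.simple j * r ^ n := by
    rw [← inv_pow, ← simple_conj, conj_pow]
    simp [mul_assoc]
  rw [mul_inv_eq_iff_eq_mul, ← eq_inv_mul_iff_mul_eq, ← mul_assoc, ← mul_assoc, pow_inv_mul,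
    mul_assoc, mul_assoc, ← pow_add, ← pow_add, show n + (k + n) = 2 * n + k by ring]

open scoped Classical in
theorem reflectionFlip_mul_pow_apply (i j : B) (n : ℕ) (p : W × ZMod 2) :
    ((reflectionFlip cs i * reflectionFlip cs j) ^ n) p =
      ((cs.simple i * cs.simple j) ^ n * p.1 * ((cs.simple i * cs.simple j) ^ n)⁻¹,
        p.2 + ∑ k ∈ Finset.range (2 * n),
          if p.1 = cs.simple j * (cs.simple i * cs.simple j) ^ k then 1 else 0) := by
  induction n with
  | zero => simp [Function.End.one_def]
  | succ n ih =>
    set r := cs.simple i * cs.simple j with hr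
    set q := r ^ n * p.1 * (r ^ n)⁻¹ with hq
    have flip_j : q = cs.simple j ↔ p.1 = cs.simple j * r ^ (2 * n) := by
      simpa using pow_mul_conj_eq_simple_mul_pow_iff cs i j n 0 p.1
    have flip_i : cs.simple j * q * cs.simple j = cs.simple i ↔
        p.1 = cs.simple j * r ^ (2 * n + 1) := by
      rw [← pow_mul_conj_eq_simple_mul_pow_iff, pow_one, ← hr, ← hq,
        ← eq_mul_inv_iff_mul_eq, ← eq_inv_mul_iff_mul_eq, inv_simple]
    rw [pow_succ', end_mul_apply, end_mul_apply, ih, Nat.mul_succ, Finset.sum_range_succ,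
      Finset.sum_range_succ]
    simp only [reflectionFlip, flip_i, flip_j, Prod.mk.injEq, add_assoc, and_true]
    simp [pow_succ', hq, hr, mul_assoc]

theorem isLiftable_reflectionFlip : M.IsLiftable (reflectionFlip cs) := by
  classical
  intro i j
  funext p
  rw [reflectionFlip_mul_pow_apply, two_mul, Finset.sum_range_add]
  simp only [pow_add, cs.simple_mul_simple_pow, one_mul, CharTwo.add_self_eq_zero]
  simp [Function.End.one_def]

/-- The parity of the number of occurrences of `t` in the left inversion sequence of any word for
`w`. It is `1` exactly when `t` is a left inversion of `w`, and unlike `IsLeftInversion` it is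
visibly a cocycle in `w`. The inverse turns the action by conjugation on `t` into one from the
right. -/
def inversionParity (w t : W) : ZMod 2 :=
  (cs.lift ⟨_, isLiftable_reflectionFlip cs⟩ w⁻¹ (t, 0)).2

theorem lift_reflectionFlip_apply (w : W) (p : W × ZMod 2) :
    cs.lift ⟨_, isLiftable_reflectionFlip cs⟩ w p =
      (w * p.1 * w⁻¹, inversionParity cs w⁻¹ p.1 + p.2) := by
  have fst_and_snd : ∀ p : W × ZMod 2,
      (cs.lift ⟨_, isLiftable_reflectionFlip cs⟩ w p).1 = w * p.1 * w⁻¹ ∧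
        (cs.lift ⟨_, isLiftable_reflectionFlip cs⟩ w p).2 =
          (cs.lift ⟨_, isLiftable_reflectionFlip cs⟩ w (p.1, 0)).2 + p.2 := by
    induction w using cs.simple_induction_left with
    | one => simp [Function.End.one_def]
    | mul_simple_left w i ih =>
      intro p
      simp only [map_mul, end_mul_apply, lift_apply_simple,
        reflectionFlip]
      rw [(ih p).1, (ih p).2, (ih (p.1, 0)).1]
      exact ⟨by simp [mul_assoc], by ring⟩
  rw [inversionParity, inv_inv]
  exact Prod.ext (fst_and_snd p).1 (fst_and_snd p).2

theorem inversionParity_one (t : W) : inversionParity cs 1 t = 0 := by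
  simp [inversionParity, Function.End.one_def]

theorem inversionParity_mul (u v t : W) :
    inversionParity cs (u * v) t =
      inversionParity cs u t + inversionParity cs v (u⁻¹ * t * u) := by
  rw [inversionParity, mul_inv_rev, map_mul, end_mul_apply,
    lift_reflectionFlip_apply cs u⁻¹, lift_reflectionFlip_apply]
  simp [add_comm]

open scoped Classical in
theorem inversionParity_simple (i : B) (t : W) :
    inversionParity cs (cs.simple i) t = if t = cs.simple i then 1 else 0 := by
  rw [inversionParity, inv_simple, lift_apply_simple, reflectionFlip, zero_add]

theorem mem_leftInvSeq_of_inversionParity_ne_zero {ω : List B} {t : W}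
    (h : inversionParity cs (cs.wordProd ω) t ≠ 0) : t ∈ cs.leftInvSeq ω := by
  induction ω generalizing t with
  | nil => simp [inversionParity_one] at h
  | cons i ω ih =>
    rw [wordProd_cons, inversionParity_mul, inversionParity_simple] at h
    by_cases ht : t = cs.simple i
    · simp [leftInvSeq, ht]
    · rw [if_neg ht, zero_add] at h
      refine List.mem_cons_of_mem _ (List.mem_map.mpr ⟨_, ih h, ?_⟩)
      simp [mul_assoc]

theorem inversionParity_self {t : W} (ht : cs.IsReflection t) : inversionParity cs t t = 1 := by
  obtain ⟨u, i, rfl⟩ := ht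
  have cancel := inversionParity_mul cs u u⁻¹ (u * cs.simple i * u⁻¹)
  rw [mul_inv_cancel, inversionParity_one] at cancel
  rw [inversionParity_mul, inversionParity_mul, inversionParity_simple]
  simp only [mul_assoc, mul_inv_rev, inv_mul_cancel_left, inv_mul_cancel, mul_one, inv_simple,
    simple_mul_simple_self, if_true] at cancel ⊢
  rw [add_right_comm, ← cancel, zero_add]

theorem isLeftInversion_of_inversionParity_ne_zero {w t : W} (h : inversionParity cs w t ≠ 0) :
    cs.IsLeftInversion w t := by
  obtain ⟨ω, hω, rfl⟩ := cs.exists_isReduced w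
  exact cs.isLeftInversion_of_mem_leftInvSeq hω (mem_leftInvSeq_of_inversionParity_ne_zero cs h)

theorem isLeftInversion_iff_inversionParity_ne_zero {w t : W} :
    cs.IsLeftInversion w t ↔ inversionParity cs w t ≠ 0 := by
  refine ⟨fun h h0 => ?_, isLeftInversion_of_inversionParity_ne_zero cs⟩
  refine h.1.isLeftInversion_mul_right_iff.mp (isLeftInversion_of_inversionParity_ne_zero cs ?_) h
  rw [inversionParity_mul, inversionParity_self cs h.1, inv_mul_cancel, one_mul, h0]
  decide

theorem isLeftInversion_mul_iff {u v t : W} :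
    cs.IsLeftInversion (u * v) t ↔
      Xor (cs.IsLeftInversion u t) (cs.IsLeftInversion v (u⁻¹ * t * u)) := by
  have add_ne_zero_iff : ∀ a b : ZMod 2, a + b ≠ 0 ↔ Xor (a ≠ 0) (b ≠ 0) := by
    simp only [xor_def]
    decide
  simp only [isLeftInversion_iff_inversionParity_ne_zero, inversionParity_mul, add_ne_zero_iff]

theorem not_isLeftInversion_one (t : W) : ¬ cs.IsLeftInversion 1 t := by
  simp [IsLeftInversion]

theorem isLeftInversion_simple_iff {i : B} {t : W} :
    cs.IsLeftInversion (cs.simple i) t ↔ t = cs.simple i := by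
  simp [isLeftInversion_iff_inversionParity_ne_zero, inversionParity_simple]

theorem isLeftInversion_inv_iff_conj {w t : W} :
    cs.IsLeftInversion w⁻¹ t ↔ cs.IsLeftInversion w (w * t * w⁻¹) := by
  rw [isLeftInversion_inv_iff, IsRightInversion, IsLeftInversion, isReflection_conj_iff,
    inv_mul_cancel_right]

theorem strong_exchange {ω : List B} {t : W} (h : cs.IsLeftInversion (cs.wordProd ω) t) :
    ∃ k < ω.length, t * cs.wordProd ω = cs.wordProd (ω.eraseIdx k) := by
  have mem := mem_leftInvSeq_of_inversionParity_ne_zero cs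
    ((isLeftInversion_iff_inversionParity_ne_zero cs).mp h)
  obtain ⟨k, hk, rfl⟩ := List.mem_iff_getElem.mp mem
  refine ⟨k, by simpa using hk, ?_⟩
  rw [← cs.getD_leftInvSeq_mul_wordProd, List.getD_eq_getElem _ _ hk]

theorem length_mul_eq_add_of_disjoint_inversions {u v : W}
    (h : ∀ t, cs.IsLeftInversion u⁻¹ t → ¬ cs.IsLeftInversion v t) :
    cs.length (u * v) = cs.length u + cs.length v := by
  induction u using induction_of_not_isLeftDescent cs with
  | one => simp
  | simple_mul i u hi ih =>
    have hi' := (cs.isLeftInversion_simple_iff_isLeftDescent u i).not.mpr hi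
    have inversion_inv : ∀ t, cs.IsLeftInversion u⁻¹ t ∨ u * t * u⁻¹ = cs.simple i →
        cs.IsLeftInversion (cs.simple i * u)⁻¹ t := by
      intro t ht
      have not_both : u * t * u⁻¹ = cs.simple i → ¬ cs.IsLeftInversion u⁻¹ t := fun h => by
        rwa [isLeftInversion_inv_iff_conj, h]
      rw [mul_inv_rev, inv_simple, isLeftInversion_mul_iff, isLeftInversion_simple_iff, inv_inv,
        xor_def]
      tauto
    have huv : ¬ cs.IsLeftDescent (u * v) i := by
      rw [← isLeftInversion_simple_iff_isLeftDescent, isLeftInversion_mul_iff]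
      rintro (⟨hu, -⟩ | ⟨hv, -⟩)
      · exact hi' hu
      · exact h _ (inversion_inv _ (.inr (by simp [mul_assoc]))) hv
    have ih := ih fun t ht => h t (inversion_inv t (.inl ht))
    rw [mul_assoc, cs.not_isLeftDescent_iff.mp huv, cs.not_isLeftDescent_iff.mp hi, ih,
      add_right_comm]

theorem map_mul_eq_add_iff_length_mul_eq_add {N : Type*} [AddCommMonoid N] [PartialOrder N]
    [IsOrderedCancelAddMonoid N] {f : W → N} (map_one : f 1 = 0)
    (map_mul_le : ∀ x y, f (x * y) ≤ f x + f y) (map_simple_pos : ∀ i, 0 < f (cs.simple i))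
    (map_simple_mul : ∀ i w, ¬ cs.IsLeftDescent w i →
      f (cs.simple i * w) = f (cs.simple i) + f w) (x y : W) :
    f (x * y) = f x + f y ↔ cs.length (x * y) = cs.length x + cs.length y := by
  induction x using induction_of_not_isLeftDescent cs with
  | one => simp [map_one]
  | simple_mul i x hx ih =>
    rw [mul_assoc, map_simple_mul i x hx, cs.not_isLeftDescent_iff.mp hx]
    by_cases hxy : cs.IsLeftDescent (x * y) i
    · have hlt : f (cs.simple i * (x * y)) < f (cs.simple i) + f x + f y := by
        have h := map_simple_mul i _ (cs.isLeftDescent_iff_not_isLeftDescent_mul.mp hxy)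
        rw [simple_mul_simple_cancel_left] at h
        calc f (cs.simple i * (x * y)) < f (cs.simple i) + f (cs.simple i * (x * y)) :=
              lt_add_of_pos_left _ (map_simple_pos i)
          _ = f (x * y) := h.symm
          _ ≤ f x + f y := map_mul_le x y
          _ ≤ f (cs.simple i) + f x + f y := by
              rw [add_assoc]
              exact le_add_of_nonneg_left (map_simple_pos i).le
      have hlt' : cs.length (cs.simple i * (x * y)) < cs.length x + 1 + cs.length y :=
        (hxy.trans_le (cs.length_mul_le x y)).trans_le (by lia)
      exact iff_of_false hlt.ne hlt'.ne
    · rw [map_simple_mul i _ hxy, cs.not_isLeftDescent_iff.mp hxy, add_assoc, add_right_inj, ih]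
      lia

end Inversions

section Parabolic

variable {B W : Type*} [Group W] {M : CoxeterMatrix B} (cs : CoxeterSystem M W) {J : Set B}

/-- The standard parabolic subgroup `W_J` for an arbitrary set `J` of simple reflections; the
group `parab B W M cs G i` is the case in which `J` is the orbit of `i`. -/
def standardParabolic (J : Set B) : Subgroup W :=
  Subgroup.closure (cs.simple '' J)

/-- `w` is an element of maximal length of the subgroup `H`. -/
def IsLongestIn (H : Subgroup W) (w : W) : Prop :=
  w ∈ H ∧ ∀ u ∈ H, cs.length u ≤ cs.length w

theorem simple_mem_standardParabolic {i : B} (hi : i ∈ J) :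
    cs.simple i ∈ standardParabolic cs J :=
  Subgroup.subset_closure ⟨i, hi, rfl⟩

theorem mem_standardParabolic_of_isLeftInversion {v t : W} (hv : v ∈ standardParabolic cs J)
    (ht : cs.IsLeftInversion v t) : t ∈ standardParabolic cs J := by
  induction hv using Subgroup.closure_induction generalizing t with
  | mem x hx =>
    obtain ⟨i, hi, rfl⟩ := hx
    rw [(isLeftInversion_simple_iff cs).mp ht]
    exact simple_mem_standardParabolic cs hi
  | one => exact absurd ht (not_isLeftInversion_one cs t)
  | mul x y hx _ ihx ihy =>
    rcases (isLeftInversion_mul_iff cs).mp ht with ⟨h, -⟩ | ⟨h, -⟩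
    · exact ihx h
    · exact (Subgroup.mul_mem_cancel_left _ (inv_mem hx)).mp
        ((Subgroup.mul_mem_cancel_right _ hx).mp (ihy h))
  | inv x hx ih =>
    exact (Subgroup.mul_mem_cancel_left _ hx).mp
      ((Subgroup.mul_mem_cancel_right _ (inv_mem hx)).mp
        (ih ((isLeftInversion_inv_iff_conj cs).mp ht)))

theorem exists_isReduced_of_mem_standardParabolic {v : W} (hv : v ∈ standardParabolic cs J) :
    ∃ ω : List B, (∀ i ∈ ω, i ∈ J) ∧ cs.IsReduced ω ∧ v = cs.wordProd ω := by
  have simple_mul : ∀ i ∈ J, ∀ w, (∃ ω : List B, (∀ i ∈ ω, i ∈ J) ∧ cs.IsReduced ω ∧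
      w = cs.wordProd ω) → ∃ ω : List B, (∀ i ∈ ω, i ∈ J) ∧ cs.IsReduced ω ∧
        cs.simple i * w = cs.wordProd ω := by
    rintro i hi _ ⟨ω, hωJ, hω, rfl⟩
    by_cases hd : cs.IsLeftDescent (cs.wordProd ω) i
    · obtain ⟨k, hk, h⟩ :=
        strong_exchange cs ((cs.isLeftInversion_simple_iff_isLeftDescent _ _).mpr hd)
      refine ⟨ω.eraseIdx k, fun j hj => hωJ j (List.mem_of_mem_eraseIdx hj), ?_, h⟩
      have hlen := cs.isLeftDescent_iff.mp hd
      rw [hω.eq, h, ← List.length_eraseIdx_add_one hk] at hlen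
      exact Nat.succ_injective hlen
    · refine ⟨i :: ω, by simpa using ⟨hi, hωJ⟩, ?_, (cs.wordProd_cons i ω).symm⟩
      rw [CoxeterSystem.IsReduced, wordProd_cons, cs.not_isLeftDescent_iff.mp hd, hω.eq,
        List.length_cons]
  induction hv using Subgroup.closure_induction_left with
  | one => exact ⟨[], by simp [CoxeterSystem.IsReduced]⟩
  | mul_left x hx w _ ih =>
    obtain ⟨i, hi, rfl⟩ := hx
    exact simple_mul i hi w ih
  | inv_mul_cancel x hx w _ ih =>
    obtain ⟨i, hi, rfl⟩ := hx
    rw [inv_simple]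
    exact simple_mul i hi w ih

theorem exists_isLeftDescent_of_mem_standardParabolic {v : W} (hv : v ∈ standardParabolic cs J)
    (hv1 : v ≠ 1) : ∃ i ∈ J, cs.IsLeftDescent v i := by
  obtain ⟨_ | ⟨i, ω⟩, hJ, hω, rfl⟩ := exists_isReduced_of_mem_standardParabolic cs hv
  · simp at hv1
  · refine ⟨i, hJ i (by simp), ?_⟩
    rw [IsLeftDescent, hω.eq, wordProd_cons, simple_mul_simple_cancel_left, List.length_cons]
    exact Nat.lt_succ_of_le (cs.length_wordProd_le ω)

theorem not_isLeftInversion_of_mem_standardParabolic {w t : W}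
    (hw : ∀ i ∈ J, ¬ cs.IsLeftDescent w i) (ht : t ∈ standardParabolic cs J) :
    ¬ cs.IsLeftInversion w t := by
  obtain ⟨u, hu, hmin⟩ := exists_minimalFor_of_wellFoundedLT (· ∈ standardParabolic cs J)
    (fun u => cs.length (u⁻¹ * w)) ⟨1, one_mem _⟩
  have not_inversion_coset_min : ∀ t ∈ standardParabolic cs J,
      ¬ cs.IsLeftInversion (u⁻¹ * w) t := by
    intro t ht hinv
    have hut : u * t⁻¹ ∈ standardParabolic cs J := mul_mem hu (inv_mem ht)
    have hlt : cs.length ((u * t⁻¹)⁻¹ * w) < cs.length (u⁻¹ * w) := by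
      simpa [mul_assoc] using hinv.2
    exact hlt.not_ge (hmin hut hlt.le)
  have inversion_iff : ∀ t ∈ standardParabolic cs J,
      (cs.IsLeftInversion w t ↔ cs.IsLeftInversion u t) := by
    intro t ht
    have hconj := not_inversion_coset_min _ (mul_mem (mul_mem (inv_mem hu) ht) hu)
    rw [← mul_inv_cancel_left u w, isLeftInversion_mul_iff, xor_def]
    tauto
  have hu1 : u = 1 := by
    by_contra hu1
    obtain ⟨i, hi, hd⟩ := exists_isLeftDescent_of_mem_standardParabolic cs hu hu1
    apply hw i hi
    rw [← isLeftInversion_simple_iff_isLeftDescent] at hd ⊢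
    exact (inversion_iff _ (simple_mem_standardParabolic cs hi)).mpr hd
  rw [inversion_iff t ht, hu1]
  exact not_isLeftInversion_one cs t

theorem length_mul_eq_add_of_mem_standardParabolic {v w : W} (hv : v ∈ standardParabolic cs J)
    (hw : ∀ i ∈ J, ¬ cs.IsLeftDescent w i) :
    cs.length (v * w) = cs.length v + cs.length w :=
  length_mul_eq_add_of_disjoint_inversions cs fun _ ht =>
    not_isLeftInversion_of_mem_standardParabolic cs hw
      (mem_standardParabolic_of_isLeftInversion cs (inv_mem hv) ht)

variable {cs} in
theorem IsLongestIn.inv {H : Subgroup W} {w : W} (hw : IsLongestIn cs H w) :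
    IsLongestIn cs H w⁻¹ :=
  ⟨inv_mem hw.1, fun u hu => (hw.2 u hu).trans_eq (cs.length_inv w).symm⟩

variable {cs} in
theorem IsLongestIn.isLeftInversion {H : Subgroup W} {w t : W} (hw : IsLongestIn cs H w)
    (htH : t ∈ H) (ht : cs.IsReflection t) : cs.IsLeftInversion w t :=
  ⟨ht, (hw.2 _ (mul_mem htH hw.1)).lt_of_ne (ht.length_mul_right_ne w)⟩

theorem IsLongestIn.eq_of_forall_isLeftDescent {v w : W}
    (hw : IsLongestIn cs (standardParabolic cs J) w) (hv : v ∈ standardParabolic cs J)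
    (hd : ∀ i ∈ J, cs.IsLeftDescent v i) : v = w := by
  by_contra hne
  obtain ⟨i, hi, hdi⟩ := exists_isLeftDescent_of_mem_standardParabolic cs
    (mul_mem hv (inv_mem hw.1)) (mt mul_inv_eq_one.mp hne)
  have hvi := (cs.isLeftInversion_simple_iff_isLeftDescent v i).mpr (hd i hi)
  have hwi : cs.IsLeftInversion w⁻¹ (v⁻¹ * cs.simple i * v) :=
    hw.inv.isLeftInversion
      (mul_mem (mul_mem (inv_mem hv) (simple_mem_standardParabolic cs hi)) hv)
      (by simpa using (cs.isReflection_simple i).conj v⁻¹)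
  rw [← isLeftInversion_simple_iff_isLeftDescent, isLeftInversion_mul_iff, xor_def] at hdi
  tauto

end Parabolic

section FixedPoints

variable {B W : Type*} [Group W] {M : CoxeterMatrix B} (cs : CoxeterSystem M W)
  {G : Type*} [Group G] [MulDistribMulAction G W] [MulAction G B]

theorem smul_wordProd (hact : ∀ (σ : G) (i : B), σ • cs.simple i = cs.simple (σ • i))
    (σ : G) (ω : List B) :
    σ • cs.wordProd ω = cs.wordProd (ω.map (σ • ·)) := by
  induction ω with
  | nil => simp
  | cons i ω ih => simp [wordProd_cons, smul_mul', ih, hact]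

theorem length_smul (hact : ∀ (σ : G) (i : B), σ • cs.simple i = cs.simple (σ • i))
    (σ : G) (w : W) : cs.length (σ • w) = cs.length w := by
  have length_smul_le : ∀ (σ : G) (w : W), cs.length (σ • w) ≤ cs.length w := by
    intro σ w
    obtain ⟨ω, hω, rfl⟩ := cs.exists_isReduced w
    rw [smul_wordProd cs hact, hω.eq, ← ω.length_map (σ • ·)]
    exact cs.length_wordProd_le _
  exact (length_smul_le σ w).antisymm (by simpa using length_smul_le σ⁻¹ (σ • w))

theorem isLeftDescent_smul_smul_iff
    (hact : ∀ (σ : G) (i : B), σ • cs.simple i = cs.simple (σ • i)) {σ : G} {w : W} {i : B} :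
    cs.IsLeftDescent (σ • w) (σ • i) ↔ cs.IsLeftDescent w i := by
  rw [IsLeftDescent, ← hact, ← smul_mul', length_smul cs hact, length_smul cs hact, IsLeftDescent]

theorem smul_mem_standardParabolic
    (hact : ∀ (σ : G) (i : B), σ • cs.simple i = cs.simple (σ • i))
    {J : Set B} {w : W} (hw : w ∈ standardParabolic cs J) (σ : G) :
    σ • w ∈ standardParabolic cs (σ • J) := by
  have le_comap : standardParabolic cs J ≤
      (standardParabolic cs (σ • J)).comap (MulDistribMulAction.toMonoidHom W σ) := by
    rw [standardParabolic, Subgroup.closure_le]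
    rintro _ ⟨i, hi, rfl⟩
    simpa [hact] using simple_mem_standardParabolic cs (Set.smul_mem_smul_set (a := σ) hi)
  exact le_comap hw

theorem IsLongestIn.eq_of_smul_eq_self
    (hact : ∀ (σ : G) (i : B), σ • cs.simple i = cs.simple (σ • i)) {k : B} {v w : W}
    (hw : IsLongestIn cs (standardParabolic cs (orbit G k)) w)
    (hv : v ∈ standardParabolic cs (orbit G k)) (hfix : ∀ σ : G, σ • v = v) (hv1 : v ≠ 1) :
    v = w := by
  obtain ⟨i, hi, hd⟩ := exists_isLeftDescent_of_mem_standardParabolic cs hv hv1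
  refine hw.eq_of_forall_isLeftDescent cs hv fun j hj => ?_
  rw [← orbit_eq_iff.mpr hi] at hj
  obtain ⟨σ, rfl⟩ := hj
  rw [← hfix σ]
  exact (isLeftDescent_smul_smul_iff cs hact).mpr hd

theorem conj_mem_standardParabolic_orbit
    (hact : ∀ (σ : G) (i : B), σ • cs.simple i = cs.simple (σ • i))
    {i k : B} {u v : W} (hfix : ∀ σ : G, σ • u = u)
    (hi : u⁻¹ * cs.simple i * u ∈ standardParabolic cs (orbit G k))
    (hv : v ∈ standardParabolic cs (orbit G i)) :
    u⁻¹ * v * u ∈ standardParabolic cs (orbit G k) := by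
  have le_comap : standardParabolic cs (orbit G i) ≤
      (standardParabolic cs (orbit G k)).comap (MulAut.conj u⁻¹).toMonoidHom := by
    rw [standardParabolic, Subgroup.closure_le]
    rintro _ ⟨_, ⟨σ, rfl⟩, rfl⟩
    have smul_conj_mem := smul_mem_standardParabolic cs hact hi σ
    rw [smul_orbit, smul_mul', smul_mul', smul_inv', hfix, hact] at smul_conj_mem
    simpa using smul_conj_mem
  simpa using le_comap hv

end FixedPoints

section FixedSubgroup

variable {B W : Type} [Group W] {M : CoxeterMatrix B} {cs : CoxeterSystem M W}
  {G : Type} [Group G] [MulDistribMulAction G W]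
  {ι : Type} {M' : CoxeterMatrix ι} (cs' : CoxeterSystem M' (fixedSubgroup W G))

theorem coe_simple_ne_one (a : ι) : (cs'.simple a : W) ≠ 1 := by
  rw [Ne, OneMemClass.coe_eq_one, ← cs'.length_eq_zero_iff, cs'.length_simple]
  exact one_ne_zero

theorem exists_conj_mem_of_isLeftInversion {P : ι → Subgroup W}
    (hP : ∀ a t, cs.IsLeftInversion (cs'.simple a : W) t → t ∈ P a)
    {x : fixedSubgroup W G} {t : W} (ht : cs.IsLeftInversion (x : W) t) :
    ∃ (u : fixedSubgroup W G) (a : ι), (u : W)⁻¹ * t * u ∈ P a ∧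
      cs'.IsLeftInversion x (u * cs'.simple a * u⁻¹) := by
  induction x using induction_of_not_isLeftDescent cs' generalizing t with
  | one => exact absurd ht (not_isLeftInversion_one cs t)
  | simple_mul b x hb ih =>
    rcases (isLeftInversion_mul_iff cs).mp ht with ⟨h, -⟩ | ⟨h, -⟩
    · refine ⟨1, b, by simpa using hP b t h, ?_⟩
      rw [one_mul, inv_one, mul_one, isLeftInversion_simple_iff_isLeftDescent,
        isLeftDescent_iff_not_isLeftDescent_mul, simple_mul_simple_cancel_left]
      exact hb
    · obtain ⟨u, a, hmem, hinv⟩ := ih h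
      refine ⟨cs'.simple b * u, a, by simpa [mul_assoc] using hmem, ?_⟩
      rw [← isLeftInversion_simple_iff_isLeftDescent] at hb
      rw [isLeftInversion_mul_iff, isLeftInversion_simple_iff]
      refine .inr ⟨by simpa [mul_assoc] using hinv, fun heq => hb ?_⟩
      have conj_eq : u * cs'.simple a * u⁻¹ = cs'.simple b := by
        rw [← cs'.inv_simple b, ← mul_eq_one_iff_eq_inv]
        simpa [mul_assoc] using heq
      rwa [← conj_eq]

variable [MulAction G B] {f : ι → B}

theorem isLeftDescent_of_isLeftDescent_coe
    (hact : ∀ (σ : G) (i : B), σ • cs.simple i = cs.simple (σ • i))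
    (hf : ∀ a, IsLongestIn cs (standardParabolic cs (orbit G (f a))) (cs'.simple a : W))
    {x : fixedSubgroup W G} {a : ι} {i : B}
    (hi : i ∈ orbit G (f a)) (hd : cs.IsLeftDescent (x : W) i) : cs'.IsLeftDescent x a := by
  rw [← isLeftInversion_simple_iff_isLeftDescent] at hd ⊢
  obtain ⟨u, b, hmem, hinv⟩ := exists_conj_mem_of_isLeftInversion cs'
    (fun a _ => mem_standardParabolic_of_isLeftInversion cs (hf a).1) hd
  have conj_mem : (u : W)⁻¹ * cs'.simple a * u ∈ standardParabolic cs (orbit G (f b)) :=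
    conj_mem_standardParabolic_orbit cs hact u.2 hmem (orbit_eq_iff.mpr hi ▸ (hf a).1)
  have conj_ne_one : (u : W)⁻¹ * cs'.simple a * u ≠ 1 := by
    simpa [mul_assoc, inv_mul_eq_one] using coe_simple_ne_one cs' a
  have conj_eq : u⁻¹ * cs'.simple a * u = cs'.simple b :=
    Subtype.ext <| (hf b).eq_of_smul_eq_self cs hact conj_mem (u⁻¹ * cs'.simple a * u).2 conj_ne_one
  rw [← conj_eq] at hinv
  simpa [mul_assoc] using hinv

theorem length_coe_simple_mul
    (hact : ∀ (σ : G) (i : B), σ • cs.simple i = cs.simple (σ • i))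
    (hf : ∀ a, IsLongestIn cs (standardParabolic cs (orbit G (f a))) (cs'.simple a : W))
    {x : fixedSubgroup W G} {a : ι} (ha : ¬ cs'.IsLeftDescent x a) :
    cs.length ((cs'.simple a * x : fixedSubgroup W G) : W) =
      cs.length (cs'.simple a : W) + cs.length (x : W) :=
  length_mul_eq_add_of_mem_standardParabolic cs (hf a).1 fun _ hi hd =>
    ha (isLeftDescent_of_isLeftDescent_coe cs' hact hf hi hd)

end FixedSubgroup

end CoxeterFixedPoints

/-!
STATEMENT 5: For the Coxeter system `(W^G, S_G)` of fixed points, with length function `ℓ_G`,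
and `x, y ∈ W^G`:  `ℓ(xy) = ℓ(x) + ℓ(y)` iff `ℓ_G(xy) = ℓ_G(x) + ℓ_G(y)`.
-/

theorem statement5 (B W : Type) [Group W] (M : CoxeterMatrix B) (cs : CoxeterSystem M W)
    (G : Type) [Group G] [MulDistribMulAction G W] [MulAction G B]
    (hact : ∀ (σ : G) (i : B), σ • cs.simple i = cs.simple (σ • i))
    (ι : Type) (M' : CoxeterMatrix ι) (cs' : CoxeterSystem M' (fixedSubgroup W G))
    (hS : Set.range (fun i => (cs'.simple i : W)) = SGset B W M cs G)
    (x y : fixedSubgroup W G) :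
    cs.length ((x : W) * y) = cs.length (x : W) + cs.length (y : W) ↔
      cs'.length (x * y) = cs'.length x + cs'.length y := by
  have exists_isLongestIn : ∀ a, ∃ i : B, CoxeterFixedPoints.IsLongestIn cs
      (CoxeterFixedPoints.standardParabolic cs (MulAction.orbit G i)) (cs'.simple a : W) := by
    intro a
    obtain ⟨i, hmem, -, hmax⟩ : (cs'.simple a : W) ∈ SGset B W M cs G := hS ▸ ⟨a, rfl⟩
    exact ⟨i, hmem, hmax⟩
  choose f hf using exists_isLongestIn
  exact CoxeterFixedPoints.map_mul_eq_add_iff_length_mul_eq_add cs'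
    (f := fun w => cs.length (w : W)) cs.length_one (fun x y => cs.length_mul_le x y)
    (fun a => Nat.pos_of_ne_zero (mt cs.length_eq_zero_iff.mp
      (CoxeterFixedPoints.coe_simple_ne_one cs' a)))
    (fun a w ha => CoxeterFixedPoints.length_coe_simple_mul cs' hact hf ha) x y
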